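/- Let n ≥ 2 be an integer, ν ∈ {1,2,…,n}, N = 2n+1, and set q := ⌊n/ν⌋ and s_n(z) := Σ_{j=0}^{q} (−z^ν)^j / (ν^j j!). Let z_1,…,z_N be the roots of the polynomial s_n(z) + z^N s_n(1/z). Then all z_k lie on the unit circle, the numbers t_k := arg z_k ∈ [0,2π) are pairwise distinct, and for every trigonometric polynomial T_n(t) = Σ_{m=1}^n (a_m cos mt + b_m sin mt) (with arbitrary complex coefficients a_m, b_m) one has the identity τ_ν(t) ≡ Σ_{k=1}^N T_n(t − t_k), where τ_ν(t) := a_ν cos νt + b_ν sin νt is the ν-th harmonic of T_n. -/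

import Mathlib

/-!
Write `P(z) = s_n(z) + z^N s_n(1/z)` with `N = 2n + 1`. Three facts carry the proof.

* `s_n` has no zeros in the closed unit disc (`sVal_ne_zero`), because it is a partial sum of the
  exponential at `w = -z^ν/ν`, and `‖w‖ ≤ 1`.
* As `s_n` has real coefficients, `z^(2n) s_n(1/z)` and `s_n(z)` have equal modulus on the unit
  circle. The maximum modulus principle then gives `‖P(z)‖ ≥ (1 - ‖z‖) ‖s_n(z)‖` in the disc
  (`le_norm_eval`). Hence `P` has no roots inside the disc; since `P(z) = z^N P(1/z)`, it has none
  outside either (`norm_root`). A double root on the circle would contradict the linear rate in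
  `1 - ‖z‖` (`nodup_roots`).
* The coefficients of `P` of degrees `N, N - 1, …, N - n` are the Taylor coefficients of
  `exp(-u^ν/ν)`, so Newton's identities give `∑ z_k^m = 1` for `m = ν` and `0` for the other
  `1 ≤ m ≤ n` (`powerSum_roots`). The real and imaginary parts of these power sums, together with
  the addition formulas, yield the identity for trigonometric polynomials.
-/

open Complex Polynomial Finset

/-- The polynomial `s_n(z) + z^{2n+1} s_n(1/z)`, where
`s_n(z) = ∑_{j=0}^{⌊n/ν⌋} (−z^ν)^j/(ν^j j!)`. -/
noncomputable def harmPoly (n ν : ℕ) : Polynomial ℂ :=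
  (∑ j ∈ Finset.range (n / ν + 1),
      Polynomial.C ((-1 : ℂ) ^ j / ((ν : ℂ) ^ j * (Nat.factorial j : ℂ))) *
        Polynomial.X ^ (ν * j)) +
  ∑ j ∈ Finset.range (n / ν + 1),
      Polynomial.C ((-1 : ℂ) ^ j / ((ν : ℂ) ^ j * (Nat.factorial j : ℂ))) *
        Polynomial.X ^ (2 * n + 1 - ν * j)

/-! ### Coefficients of the polynomial -/

/-- The coefficient of `u ^ k` in the Taylor series of `exp (-u ^ ν / ν)`. -/
noncomputable def hcoef (ν k : ℕ) : ℂ :=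
  if ν ∣ k then (-1 : ℂ) ^ (k / ν) / ((ν : ℂ) ^ (k / ν) * (Nat.factorial (k / ν) : ℂ)) else 0

/-- The value `s_n(z)`, written as a sum over all exponents `k ≤ n`. -/
noncomputable def sVal (n ν : ℕ) (z : ℂ) : ℂ := ∑ k ∈ range (n + 1), hcoef ν k * z ^ k

/-- The value `z ^ (2n) * s_n(1/z)`, written without division. -/
noncomputable def sRev (n ν : ℕ) (z : ℂ) : ℂ := ∑ k ∈ range (n + 1), hcoef ν k * z ^ (2 * n - k)

lemma sum_multiples {M : Type*} [AddCommMonoid M] (n ν : ℕ) (hν : 1 ≤ ν) (f : ℕ → M) :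
    ∑ j ∈ range (n / ν + 1), f (ν * j) = ∑ k ∈ range (n + 1), if ν ∣ k then f k else 0 := by
  rw [← Finset.sum_filter]
  refine Finset.sum_bij (fun j _ => ν * j) ?_ ?_ ?_ ?_
  · intro j hj
    simp only [mem_range, mem_filter] at hj ⊢
    have : j * ν ≤ n := (Nat.le_div_iff_mul_le hν).1 (by omega)
    exact ⟨by nlinarith, dvd_mul_right _ _⟩
  · intro a _ b _ h
    exact Nat.eq_of_mul_eq_mul_left hν h
  · intro b hb
    simp only [mem_range, mem_filter] at hb
    obtain ⟨hb, j, rfl⟩ := hb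
    refine ⟨j, ?_, rfl⟩
    have : j ≤ n / ν := (Nat.le_div_iff_mul_le hν).2 (by nlinarith)
    exact mem_range.2 (by omega)
  · intros; rfl

lemma hcoef_mul (ν j : ℕ) (hν : 1 ≤ ν) :
    hcoef ν (ν * j) = (-1 : ℂ) ^ j / ((ν : ℂ) ^ j * (Nat.factorial j : ℂ)) := by
  simp [hcoef, Nat.mul_div_cancel_left j hν]

lemma hcoef_zero (ν : ℕ) : hcoef ν 0 = 1 := by simp [hcoef]

lemma conj_hcoef (ν k : ℕ) : (starRingEnd ℂ) (hcoef ν k) = hcoef ν k := by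
  unfold hcoef; split_ifs <;> simp

/-- The recursion `u F' = -u ^ ν F` satisfied by `F = exp (-u ^ ν / ν)`, on coefficients. -/
lemma hcoef_rec (ν k : ℕ) (hν : 1 ≤ ν) (hk : 1 ≤ k) :
    (k : ℂ) * hcoef ν k = if ν ≤ k then -hcoef ν (k - ν) else 0 := by
  by_cases hd : ν ∣ k
  · obtain ⟨j, rfl⟩ := hd
    obtain ⟨i, rfl⟩ : ∃ i, j = i + 1 := ⟨j - 1, by
      rcases j with _ | j
      · simp at hk
      · simp⟩
    have h1 : ν * (i + 1) - ν = ν * i := by rw [mul_add, mul_one]; omega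
    rw [if_pos (by nlinarith), h1, hcoef_mul _ _ hν, hcoef_mul _ _ hν]
    have : (ν : ℂ) ≠ 0 := by exact_mod_cast (by omega : ν ≠ 0)
    have h3 : (Nat.factorial i : ℂ) ≠ 0 := by exact_mod_cast Nat.factorial_ne_zero i
    have h4 : (i : ℂ) + 1 ≠ 0 := by exact_mod_cast Nat.succ_ne_zero i
    rw [Nat.factorial_succ]
    push_cast
    field_simp
    ring
  · have h0 : hcoef ν k = 0 := by simp [hcoef, hd]
    rw [h0]
    split_ifs with h
    · have : ¬ ν ∣ k - ν := fun h' => hd ((Nat.dvd_sub_iff_left h dvd_rfl).1 h')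
      simp [hcoef, this]
    · simp

lemma harmPoly_eq (n ν : ℕ) (hν : 1 ≤ ν) :
    harmPoly n ν = (∑ k ∈ range (n + 1), C (hcoef ν k) * X ^ k) +
      ∑ k ∈ range (n + 1), C (hcoef ν k) * X ^ (2 * n + 1 - k) := by
  unfold harmPoly
  congr 1
  · simp_rw [← hcoef_mul ν _ hν]
    rw [sum_multiples n ν hν (fun k => C (hcoef ν k) * (X : ℂ[X]) ^ k)]
    refine Finset.sum_congr rfl fun k _ => ?_
    split_ifs with h
    · rfl
    · simp [hcoef, h]
  · simp_rw [← hcoef_mul ν _ hν]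
    rw [sum_multiples n ν hν (fun k => C (hcoef ν k) * (X : ℂ[X]) ^ (2 * n + 1 - k))]
    refine Finset.sum_congr rfl fun k _ => ?_
    split_ifs with h
    · rfl
    · simp [hcoef, h]

lemma eval_harmPoly (n ν : ℕ) (hν : 1 ≤ ν) (z : ℂ) :
    (harmPoly n ν).eval z = sVal n ν z + z * sRev n ν z := by
  rw [harmPoly_eq n ν hν, eval_add, eval_finsetSum, eval_finsetSum, sVal, sRev, Finset.mul_sum]
  congr 1
  · simp
  · refine Finset.sum_congr rfl fun k hk => ?_
    have : 2 * n + 1 - k = (2 * n - k) + 1 := by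
      have := mem_range.1 hk
      omega
    rw [this]
    simp only [eval_mul, eval_C, eval_pow, eval_X]
    ring

lemma coeff_harmPoly (n ν k : ℕ) (hν : 1 ≤ ν) (hk : k ≤ n) :
    (harmPoly n ν).coeff (2 * n + 1 - k) = hcoef ν k := by
  rw [harmPoly_eq n ν hν, coeff_add, finsetSum_coeff, finsetSum_coeff]
  rw [Finset.sum_eq_zero, Finset.sum_eq_single k]
  · simp
  · intro b hb hbk
    have := mem_range.1 hb
    rw [coeff_C_mul, coeff_X_pow, if_neg (by omega), mul_zero]
  · intro h
    exact absurd (mem_range.2 (by omega)) h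
  · intro b hb
    have := mem_range.1 hb
    rw [coeff_C_mul, coeff_X_pow, if_neg (by omega), mul_zero]

lemma natDegree_harmPoly (n ν : ℕ) (hν : 1 ≤ ν) : (harmPoly n ν).natDegree = 2 * n + 1 := by
  apply natDegree_eq_of_le_of_coeff_ne_zero
  · rw [harmPoly_eq n ν hν]
    refine (natDegree_add_le _ _).trans (max_le ?_ ?_)
    · refine natDegree_sum_le_of_forall_le _ _ fun k hk => ?_
      have := mem_range.1 hk
      exact (natDegree_C_mul_X_pow_le _ _).trans (by omega)
    · exact natDegree_sum_le_of_forall_le _ _ fun k hk =>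
        (natDegree_C_mul_X_pow_le _ _).trans (by omega)
  · have := coeff_harmPoly n ν 0 hν (by omega)
    rw [hcoef_zero] at this
    rw [Nat.sub_zero] at this
    rw [this]; exact one_ne_zero

lemma leadingCoeff_harmPoly (n ν : ℕ) (hν : 1 ≤ ν) : (harmPoly n ν).leadingCoeff = 1 := by
  rw [leadingCoeff, natDegree_harmPoly n ν hν]
  simpa [hcoef_zero] using coeff_harmPoly n ν 0 hν (by omega)

/-! ### Zero-freeness of `s_n` in the closed unit disc -/

lemma sVal_eq_exp_sum (n ν : ℕ) (hν : 1 ≤ ν) (z : ℂ) :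
    sVal n ν z = ∑ j ∈ range (n / ν + 1), (-z ^ ν / ν) ^ j / (Nat.factorial j : ℂ) := by
  have := sum_multiples n ν hν (fun k => hcoef ν k * z ^ k)
  rw [sVal]
  trans ∑ k ∈ range (n + 1), if ν ∣ k then hcoef ν k * z ^ k else 0
  · refine Finset.sum_congr rfl fun k _ => ?_
    split_ifs with h
    · rfl
    · simp [hcoef, h]
  rw [← this]
  refine Finset.sum_congr rfl fun j _ => ?_
  rw [hcoef_mul _ _ hν, div_pow, neg_pow (z ^ ν), pow_mul]
  ring

/-- The partial sums of the exponential of order at least two have no zeros in the closed unit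
disc: there `‖exp w‖ ≥ exp (-1) > 2/9`, which bounds the Taylor remainder. -/
lemma expSum_ne_zero (q : ℕ) (hq : 2 ≤ q) (w : ℂ) (hw : ‖w‖ ≤ 1) :
    ∑ j ∈ range (q + 1), w ^ j / (Nat.factorial j : ℂ) ≠ 0 := by
  intro h
  have hb := Complex.exp_bound hw (n := q + 1) (by omega)
  rw [h, sub_zero, Complex.norm_exp] at hb
  have h1 : Real.exp (-1) ≤ Real.exp w.re :=
    Real.exp_le_exp.2 (by have := (abs_le.1 (Complex.abs_re_le_norm w)).1; linarith)
  have h2 : (2 / 9 : ℝ) < Real.exp (-1) := by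
    rw [Real.exp_neg, lt_inv_comm₀ (by norm_num) (Real.exp_pos _)]
    have := Real.exp_one_lt_d9
    norm_num at this ⊢
    linarith
  have h3 : ‖w‖ ^ (q + 1) ≤ 1 := pow_le_one₀ (norm_nonneg _) hw
  have h4 : (((q + 1).succ : ℕ) : ℝ) * (((q + 1).factorial : ℝ) * ((q + 1 : ℕ) : ℝ))⁻¹ ≤ 2 / 9 := by
    have h6 : (6 : ℝ) ≤ ((q + 1).factorial : ℝ) := by
      exact_mod_cast Nat.factorial_le (by omega : 3 ≤ q + 1)
    have hq' : (2 : ℝ) ≤ q := by exact_mod_cast hq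
    rw [← div_eq_mul_inv, div_le_iff₀ (by positivity)]
    push_cast
    nlinarith
  have h5 : ‖w‖ ^ (q + 1) * ((((q + 1).succ : ℕ) : ℝ) *
      (((q + 1).factorial : ℝ) * ((q + 1 : ℕ) : ℝ))⁻¹) ≤ 1 * (2 / 9) :=
    mul_le_mul h3 h4 (by positivity) zero_le_one
  linarith

lemma sVal_ne_zero (n ν : ℕ) (hn : 2 ≤ n) (hν : 1 ≤ ν) (hνn : ν ≤ n) (z : ℂ) (hz : ‖z‖ ≤ 1) :
    sVal n ν z ≠ 0 := by
  rw [sVal_eq_exp_sum n ν hν]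
  have hν' : (1 : ℝ) ≤ ν := by exact_mod_cast hν
  have hw : ‖-z ^ ν / (ν : ℂ)‖ ≤ 1 / ν := by
    rw [norm_div, norm_neg, norm_pow, Complex.norm_natCast]
    gcongr
    exact pow_le_one₀ (norm_nonneg _) hz
  have hq : 1 ≤ n / ν := (Nat.le_div_iff_mul_le hν).2 (by omega)
  rcases hq.eq_or_lt with hq | hq
  · -- Here the sum is `1 + w`, and `ν = 1` is excluded by `n ≥ 2`, so that `‖w‖ ≤ 1/2`.
    have hν2 : 2 ≤ ν := by
      by_contra h
      have : ν = 1 := by omega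
      subst this
      simp at hq
      omega
    rw [← hq]
    simp only [Finset.sum_range_succ, Finset.sum_range_zero]
    intro h
    have hw' : -z ^ ν / (ν : ℂ) = -1 := by
      simp at h ⊢
      linear_combination h
    rw [hw'] at hw
    have : (1 : ℝ) / ν ≤ 1 / 2 := by
      gcongr
      exact_mod_cast hν2
    simp at hw this
    linarith
  · exact expSum_ne_zero _ hq _ (hw.trans (by rw [div_le_one (by positivity)]; exact hν'))

/-! ### Location and simplicity of the roots -/

lemma sRev_eq (n ν : ℕ) (z : ℂ) (hz : z ≠ 0) : sRev n ν z = z ^ (2 * n) * sVal n ν z⁻¹ := by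
  rw [sRev, sVal, Finset.mul_sum]
  refine Finset.sum_congr rfl fun k hk => ?_
  have := mem_range.1 hk
  rw [pow_sub₀ _ hz (by omega), inv_pow]
  ring

lemma sVal_conj (n ν : ℕ) (z : ℂ) :
    sVal n ν ((starRingEnd ℂ) z) = (starRingEnd ℂ) (sVal n ν z) := by
  simp [sVal, map_sum, conj_hcoef]

lemma norm_sRev_of_norm_eq_one (n ν : ℕ) (z : ℂ) (hz : ‖z‖ = 1) :
    ‖sRev n ν z‖ = ‖sVal n ν z‖ := by
  have h0 : z ≠ 0 := by
    rintro rfl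
    simp at hz
  rw [sRev_eq n ν z h0, Complex.inv_eq_conj hz, sVal_conj, norm_mul, norm_pow, hz]
  simp

/-- The maximum modulus principle, applied to the quotient of the reversed polynomial by `s_n`. -/
lemma norm_sRev_le (n ν : ℕ) (hn : 2 ≤ n) (hν : 1 ≤ ν) (hνn : ν ≤ n) (z : ℂ) (hz : ‖z‖ ≤ 1) :
    ‖sRev n ν z‖ ≤ ‖sVal n ν z‖ := by
  have hS := sVal_ne_zero n ν hn hν hνn
  have hcl : closure (Metric.ball (0 : ℂ) 1) = Metric.closedBall 0 1 :=
    closure_ball _ one_ne_zero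
  have hd : DiffContOnCl ℂ (fun z => sRev n ν z / sVal n ν z) (Metric.ball (0 : ℂ) 1) := by
    apply DifferentiableOn.diffContOnCl
    rw [hcl]
    intro x hx
    apply DifferentiableAt.differentiableWithinAt
    refine DifferentiableAt.div ?_ ?_ (hS x (by simpa using hx))
    · unfold sRev; fun_prop
    · unfold sVal; fun_prop
  have := Complex.norm_le_of_forall_mem_frontier_norm_le Metric.isBounded_ball hd (C := 1) (by
    intro w hw
    rw [frontier_ball _ one_ne_zero] at hw
    have hw : ‖w‖ = 1 := by simpa using hw
    rw [norm_div, norm_sRev_of_norm_eq_one n ν w hw]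
    exact div_self_le_one _) (z := z) (by rw [hcl]; simpa using hz)
  rw [norm_div, div_le_one (norm_pos_iff.2 (hS z hz))] at this
  exact this

/-- The quantitative bound behind both the location and the simplicity of the roots. -/
lemma le_norm_eval (n ν : ℕ) (hn : 2 ≤ n) (hν : 1 ≤ ν) (hνn : ν ≤ n) (z : ℂ) (hz : ‖z‖ ≤ 1) :
    (1 - ‖z‖) * ‖sVal n ν z‖ ≤ ‖(harmPoly n ν).eval z‖ := by
  rw [eval_harmPoly n ν hν]
  have h1 := norm_sub_norm_le (sVal n ν z) (-(z * sRev n ν z))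
  rw [norm_neg, sub_neg_eq_add, norm_mul] at h1
  have h2 := mul_le_mul_of_nonneg_left (norm_sRev_le n ν hn hν hνn z hz) (norm_nonneg z)
  linarith

lemma eval_harmPoly_inv (n ν : ℕ) (hν : 1 ≤ ν) (z : ℂ) (hz : z ≠ 0) :
    (harmPoly n ν).eval z = z ^ (2 * n + 1) * (harmPoly n ν).eval z⁻¹ := by
  rw [eval_harmPoly n ν hν, eval_harmPoly n ν hν, sRev_eq n ν z hz,
    sRev_eq n ν z⁻¹ (inv_ne_zero hz), inv_inv, pow_succ, inv_pow]
  field_simp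
  ring

lemma norm_root (n ν : ℕ) (hn : 2 ≤ n) (hν : 1 ≤ ν) (hνn : ν ≤ n) (z : ℂ)
    (hz : (harmPoly n ν).eval z = 0) : ‖z‖ = 1 := by
  have key : ∀ w : ℂ, (harmPoly n ν).eval w = 0 → 1 ≤ ‖w‖ := by
    intro w hw
    by_contra! h
    have h1 := le_norm_eval n ν hn hν hνn w h.le
    rw [hw, norm_zero] at h1
    have h2 := norm_pos_iff.2 (sVal_ne_zero n ν hn hν hνn w h.le)
    nlinarith
  have h1 := key z hz
  have h0 : z ≠ 0 := norm_pos_iff.1 (by linarith)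
  have h2 := key z⁻¹ (by
    rw [eval_harmPoly_inv n ν hν z h0] at hz
    exact (mul_eq_zero.1 hz).resolve_left (pow_ne_zero _ h0))
  rw [norm_inv] at h2
  exact le_antisymm ((one_le_inv₀ (by linarith)).1 h2) h1

/-- A double root `z` would make the polynomial `O((1 - r)²)` at `r z` as `r → 1⁻`, against the
lower bound `(1 - r) ‖s_n(r z)‖`. -/
lemma nodup_roots (n ν : ℕ) (hn : 2 ≤ n) (hν : 1 ≤ ν) (hνn : ν ≤ n) :
    (harmPoly n ν).roots.Nodup := by
  have hP : harmPoly n ν ≠ 0 := by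
    intro h
    have := leadingCoeff_harmPoly n ν hν
    simp [h] at this
  rw [Multiset.nodup_iff_count_le_one]
  intro z
  rw [count_roots]
  by_contra! h
  obtain ⟨Q, hQ⟩ := (le_rootMultiplicity_iff hP (n := 2)).1 h
  have hz : ‖z‖ = 1 := norm_root n ν hn hν hνn z (by rw [hQ]; simp)
  have hineq : ∀ r ∈ Set.Ioo (0 : ℝ) 1,
      ‖sVal n ν ((r : ℂ) * z)‖ ≤ (1 - r) * ‖Q.eval ((r : ℂ) * z)‖ := by
    intro r ⟨hr0, hr1⟩
    have hnr : ‖(r : ℂ) * z‖ = r := by simp [hz, abs_of_pos hr0]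
    have h1 := le_norm_eval n ν hn hν hνn ((r : ℂ) * z) (by rw [hnr]; exact hr1.le)
    have h2 : ‖(r : ℂ) * z - z‖ = 1 - r := by
      have : (r : ℂ) * z - z = ((r - 1 : ℝ) : ℂ) * z := by push_cast; ring
      rw [this, norm_mul, hz, mul_one, Complex.norm_real, Real.norm_eq_abs, abs_of_neg (by linarith)]
      ring
    rw [hnr, hQ, eval_mul, eval_pow, eval_sub, eval_X, eval_C, norm_mul, norm_pow, h2, pow_two,
      mul_assoc] at h1
    exact le_of_mul_le_mul_left h1 (by linarith)
  have hlim1 : Filter.Tendsto (fun r : ℝ => ‖sVal n ν ((r : ℂ) * z)‖) (nhdsWithin 1 (Set.Iio 1))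
      (nhds ‖sVal n ν (((1 : ℝ) : ℂ) * z)‖) := by
    have : Continuous (fun r : ℝ => ‖sVal n ν ((r : ℂ) * z)‖) := by unfold sVal; fun_prop
    exact (this.tendsto 1).mono_left nhdsWithin_le_nhds
  have hlim2 : Filter.Tendsto (fun r : ℝ => (1 - r) * ‖Q.eval ((r : ℂ) * z)‖)
      (nhdsWithin 1 (Set.Iio 1)) (nhds ((1 - 1) * ‖Q.eval (((1 : ℝ) : ℂ) * z)‖)) := by
    have : Continuous (fun r : ℝ => (1 - r) * ‖Q.eval ((r : ℂ) * z)‖) := by fun_prop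
    exact (this.tendsto 1).mono_left nhdsWithin_le_nhds
  have := le_of_tendsto_of_tendsto hlim1 hlim2 (by
    filter_upwards [Ioo_mem_nhdsLT (zero_lt_one' ℝ)] with r hr using hineq r hr)
  simp only [Complex.ofReal_one, one_mul, sub_self, zero_mul, norm_le_zero_iff] at this
  exact sVal_ne_zero n ν hn hν hνn z hz.le this

/-! ### Power sums of the roots -/

/-- Newton's identities combined with `hcoef_rec`: among the first `n` power sums of the roots only
the one of index `ν` is nonzero. -/
lemma powerSum_roots (n ν : ℕ) (hν : 1 ≤ ν) (z : Fin (2 * n + 1) → ℂ)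
    (hz : (harmPoly n ν).roots = Multiset.map z Finset.univ.val) (m : ℕ) (hm1 : 1 ≤ m)
    (hmn : m ≤ n) : ∑ k, z k ^ m = if m = ν then 1 else 0 := by
  have hcoef_esymm : ∀ k ≤ n, (-1 : ℂ) ^ k *
      MvPolynomial.aeval z (MvPolynomial.esymm (Fin (2 * n + 1)) ℂ k) = hcoef ν k := by
    intro k hk
    have h := coeff_eq_esymm_roots_of_card (p := harmPoly n ν)
      IsAlgClosed.card_roots_eq_natDegree (k := 2 * n + 1 - k)
      (by rw [natDegree_harmPoly n ν hν]; omega)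
    rw [coeff_harmPoly n ν k hν hk, leadingCoeff_harmPoly n ν hν, natDegree_harmPoly n ν hν,
      one_mul, show 2 * n + 1 - (2 * n + 1 - k) = k by omega] at h
    rw [MvPolynomial.aeval_esymm_eq_multiset_esymm, ← hz, ← h]
  have newton : ∀ k, k ≤ n → (k : ℂ) * hcoef ν k =
      -∑ a ∈ (antidiagonal k).filter (fun a => a.1 < k), hcoef ν a.1 * ∑ i, z i ^ a.2 := by
    intro k hk
    have h := congrArg (MvPolynomial.aeval z)
      (MvPolynomial.mul_esymm_eq_sum (Fin (2 * n + 1)) ℂ k)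
    simp only [map_mul, map_sum, map_pow, map_neg, map_one, map_natCast, MvPolynomial.psum,
      MvPolynomial.aeval_X] at h
    rw [← hcoef_esymm k hk]
    have h2 : ∑ a ∈ (antidiagonal k).filter (fun a => a.1 < k), hcoef ν a.1 * ∑ i, z i ^ a.2 =
        ∑ a ∈ (antidiagonal k).filter (fun a => a.1 < k), (-1 : ℂ) ^ a.1 *
          MvPolynomial.aeval z (MvPolynomial.esymm (Fin (2 * n + 1)) ℂ a.1) * ∑ i, z i ^ a.2 := by
      refine Finset.sum_congr rfl fun a ha => ?_
      have := (mem_filter.1 ha).2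
      rw [hcoef_esymm a.1 (by omega)]
    rw [h2]
    have h3 : (-1 : ℂ) ^ k * (-1) ^ (k + 1) = -1 := by
      rw [← pow_add]; exact Odd.neg_one_pow ⟨k, by ring⟩
    linear_combination (-1 : ℂ) ^ k * h + (∑ a ∈ (antidiagonal k).filter (fun a => a.1 < k),
      (-1 : ℂ) ^ a.1 * MvPolynomial.aeval z (MvPolynomial.esymm (Fin (2 * n + 1)) ℂ a.1) *
        ∑ i, z i ^ a.2) * h3
  induction m using Nat.strong_induction_on with
  | _ m ih =>
    have h := newton m hmn
    rw [hcoef_rec ν m hν hm1] at h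
    have h0 : (0, m) ∈ (antidiagonal m).filter (fun a => a.1 < m) := by simp; omega
    -- The term of index `0` is the power sum sought; the others are known by induction.
    rw [← Finset.add_sum_erase _ _ h0, hcoef_zero, one_mul] at h
    have h1 : ∑ a ∈ ((antidiagonal m).filter (fun a => a.1 < m)).erase (0, m),
        hcoef ν a.1 * ∑ i, z i ^ a.2 = if ν < m then hcoef ν (m - ν) else 0 := by
      have : ∀ a ∈ ((antidiagonal m).filter (fun a => a.1 < m)).erase (0, m),
          hcoef ν a.1 * ∑ i, z i ^ a.2 = if a = (m - ν, ν) then hcoef ν (m - ν) else 0 := by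
        rintro ⟨i, j⟩ ha
        simp only [mem_erase, mem_filter, HasAntidiagonal.mem_antidiagonal, ne_eq, Prod.mk.injEq] at ha
        dsimp only
        rw [ih j (by omega) (by omega) (by omega)]
        by_cases hj : j = ν
        · subst hj
          have : i = m - j := by omega
          subst this
          simp
        · simp [hj]
      rw [Finset.sum_congr rfl this, Finset.sum_ite_eq']
      congr 1
      simp only [mem_erase, mem_filter, HasAntidiagonal.mem_antidiagonal, ne_eq, Prod.mk.injEq, eq_iff_iff]
      omega
    rw [h1] at h
    dsimp only at h
    rcases lt_trichotomy m ν with hlt | heq | hgt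
    · rw [if_neg (by omega), if_neg (by omega), add_zero] at h
      rw [if_neg (by omega)]
      linear_combination h
    · subst heq
      simp only [le_refl, if_true, lt_irrefl, if_false, Nat.sub_self, hcoef_zero, add_zero] at h
      rw [if_pos rfl]
      linear_combination h
    · rw [if_pos hgt.le, if_pos hgt] at h
      rw [if_neg (by omega)]
      linear_combination h

/-! ### Extraction of the harmonic -/

/-- extraction of the `ν`-th harmonic. For `n ≥ 2`,
`1 ≤ ν ≤ n`, `N = 2n+1`, the roots of `s_n(z) + z^N s_n(1/z)` lie on the unit
circle, their arguments `t_k ∈ [0,2π)` are pairwise distinct, and for every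
trigonometric polynomial `T_n(t) = ∑_{m=1}^n (a_m cos mt + b_m sin mt)` (with
arbitrary complex coefficients) one has `τ_ν(t) ≡ ∑_{k=1}^N T_n(t − t_k)`. -/
theorem statement10 (n ν : ℕ) (hn : 2 ≤ n) (hν : 1 ≤ ν) (hνn : ν ≤ n) :
    ∃ t : Fin (2 * n + 1) → ℝ,
      Function.Injective t ∧
      (∀ k, t k ∈ Set.Ico (0 : ℝ) (2 * Real.pi)) ∧
      (harmPoly n ν).roots =
        Multiset.map (fun k => Complex.exp ((t k : ℂ) * Complex.I)) Finset.univ.val ∧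
      ∀ (A B : ℕ → ℂ) (x : ℝ),
        A ν * Complex.cos ((ν : ℂ) * (x : ℂ)) + B ν * Complex.sin ((ν : ℂ) * (x : ℂ)) =
          ∑ k : Fin (2 * n + 1), ∑ m ∈ Finset.Icc 1 n,
            (A m * Complex.cos ((m : ℂ) * ((x : ℂ) - (t k : ℂ))) +
             B m * Complex.sin ((m : ℂ) * ((x : ℂ) - (t k : ℂ)))) := by
  obtain ⟨z, hz⟩ : ∃ z : Fin (2 * n + 1) → ℂ,
      (harmPoly n ν).roots = Multiset.map z Finset.univ.val := by
    have hcard : (harmPoly n ν).roots.toList.length = 2 * n + 1 := by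
      rw [Multiset.length_toList, IsAlgClosed.card_roots_eq_natDegree, natDegree_harmPoly n ν hν]
    refine ⟨fun k => (harmPoly n ν).roots.toList.get (k.cast hcard.symm), ?_⟩
    rw [Fin.univ_val_map]
    refine (Multiset.coe_toList (harmPoly n ν).roots).symm.trans (congrArg _ ?_)
    apply List.ext_get
    · simp [hcard]
    · intro i h1 h2
      simp [-List.ofFn_succ]
  have hinj : Function.Injective z := by
    have := nodup_roots n ν hn hν hνn
    rw [hz, Fin.univ_val_map, Multiset.coe_nodup] at this
    exact List.nodup_ofFn.1 this
  have hnorm : ∀ k, ‖z k‖ = 1 := by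
    intro k
    apply norm_root n ν hn hν hνn
    have : z k ∈ (harmPoly n ν).roots := by
      rw [hz]
      exact Multiset.mem_map_of_mem _ (Finset.mem_univ_val k)
    exact (mem_roots'.1 this).2
  have hexp : ∀ k, Complex.exp
      (((toIcoMod Real.two_pi_pos 0 (Complex.arg (z k)) : ℝ) : ℂ) * Complex.I) = z k := by
    intro k
    rw [← self_sub_toIcoDiv_zsmul Real.two_pi_pos 0 (Complex.arg (z k))]
    have h1 : Complex.exp (Complex.arg (z k) * Complex.I) = z k := by
      simpa [hnorm k] using Complex.norm_mul_exp_arg_mul_I (z k)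
    conv_rhs => rw [← h1]
    rw [Complex.exp_eq_exp_iff_exists_int]
    refine ⟨-toIcoDiv Real.two_pi_pos 0 (Complex.arg (z k)), ?_⟩
    push_cast [zsmul_eq_mul]
    ring
  refine ⟨fun k => toIcoMod Real.two_pi_pos 0 (Complex.arg (z k)), ?_, ?_, ?_, ?_⟩
  · intro a b hab
    apply hinj
    rw [← hexp a, ← hexp b]
    simp only at hab
    rw [hab]
  · intro k
    simpa using toIcoMod_mem_Ico Real.two_pi_pos 0 (Complex.arg (z k))
  · simp_rw [hexp]
    exact hz
  · intro A B x
    simp only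
    set t : Fin (2 * n + 1) → ℝ := fun k => toIcoMod Real.two_pi_pos 0 (Complex.arg (z k))
    have hpow : ∀ (m : ℕ) k, Complex.exp ((m : ℂ) * (t k : ℂ) * Complex.I) = z k ^ m := by
      intro m k
      rw [mul_assoc, Complex.exp_nat_mul, hexp]
    have hre : ∀ m ∈ Icc 1 n, ∑ k, Real.cos (m * t k) = (if m = ν then 1 else 0 : ℝ) ∧
        ∑ k, Real.sin (m * t k) = 0 := by
      intro m hm
      obtain ⟨hm1, hm2⟩ := mem_Icc.1 hm
      have h := powerSum_roots n ν hν z hz m hm1 hm2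
      simp_rw [← hpow] at h
      constructor
      · have := congrArg Complex.re h
        rw [Complex.re_sum] at this
        convert this using 2 with k
        · rw [← Complex.exp_ofReal_mul_I_re]; push_cast; rfl
        · split_ifs <;> simp
      · have := congrArg Complex.im h
        rw [Complex.im_sum] at this
        convert this using 2 with k
        · rw [← Complex.exp_ofReal_mul_I_im]; push_cast; rfl
        · split_ifs <;> simp
    have hterm : ∀ m ∈ Icc 1 n, ∑ k, (A m * Complex.cos ((m : ℂ) * ((x : ℂ) - (t k : ℂ))) +
        B m * Complex.sin ((m : ℂ) * ((x : ℂ) - (t k : ℂ)))) =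
        if m = ν then A m * Complex.cos ((m : ℂ) * x) + B m * Complex.sin ((m : ℂ) * x) else 0 := by
      intro m hm
      obtain ⟨hc, hs⟩ := hre m hm
      have hc' : ∑ k, Complex.cos ((m : ℂ) * t k) = if m = ν then 1 else 0 := by
        have := congrArg Complex.ofReal hc
        push_cast at this
        rw [this]; split_ifs <;> simp
      have hs' : ∑ k, Complex.sin ((m : ℂ) * t k) = 0 := by
        have := congrArg Complex.ofReal hs
        push_cast at this
        exact this
      have : ∀ k, A m * Complex.cos ((m : ℂ) * ((x : ℂ) - (t k : ℂ))) +
          B m * Complex.sin ((m : ℂ) * ((x : ℂ) - (t k : ℂ))) =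
          (A m * Complex.cos ((m : ℂ) * x) + B m * Complex.sin ((m : ℂ) * x)) *
            Complex.cos ((m : ℂ) * t k) +
          (A m * Complex.sin ((m : ℂ) * x) - B m * Complex.cos ((m : ℂ) * x)) *
            Complex.sin ((m : ℂ) * t k) := by
        intro k
        rw [mul_sub, Complex.cos_sub, Complex.sin_sub]
        ring
      simp_rw [this]
      rw [Finset.sum_add_distrib, ← Finset.mul_sum, ← Finset.mul_sum, hc', hs']
      split_ifs <;> simp
    rw [Finset.sum_comm, Finset.sum_congr rfl hterm, Finset.sum_ite_eq',
      if_pos (mem_Icc.2 ⟨hν, hνn⟩)]
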